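/- arXiv:0805.0730 — 2 statements merged into one kernel-verified Lean document; each statement's English description precedes it below -/
import Mathlib

section
/- For any letter α of a finite alphabet A and any infinite word w over A, w is episturmian if and only if L_α(w) is episturmian. -/
/-!
Write `L` for `L_α`. In `x = L(w)` every occurrence of `α` opens a block `L(b)`, and every other
letter closes one. Hence the factors of `x` are the factors of the words `L(z)α`, with `z` a prefix
of `w`, and a factor starting with `α` can be decoded from its first letter on:
`L(v)α` is a factor of `x` only if `v` is a factor of `w` (`infix_of_Lm_append_infix`), and
`L(v)αa` is a factor of `x` iff `va` is a factor of `w` (`isFactorInf_Lm_append_pair_iff`).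

*Reversal.* The reversal of `L(v)α` is `L(ṽ)α`, where `ṽ` is the reversal of `v`
(`reverse_Lm_append`), so closure under reversal passes both ways.

*Right special factors.* By the decoding, `v` is right special in `w` iff `L(v)α` is right special
in `x`; moreover each nonempty right special factor of `x` is a suffix of such a word `L(v)α`
(`RightSpecial.exists_Lm`): it ends with `α`, since any other letter is always followed by `α`, and
if it starts with a letter other than `α`, it is always preceded by `α`. As suffixes of right
special factors are right special, having at most one right special factor of each length means
that right special factors are pairwise comparable for the suffix order
(`suffix_of_unique_rightSpecial`). This comparability is transported by `v ↦ L(v)α` and, again by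
decoding, pulled back along it.
-/

namespace EpiQP

/-- `u` is a prefix of the infinite word `w`. -/
def IsPref {σ : Type*} (u : List σ) (w : ℕ → σ) : Prop :=
  ∀ (i : ℕ) (h : i < u.length), u.get ⟨i, h⟩ = w i

/-- The prefix of length `n` of the infinite word `w`. -/
def prefWord {σ : Type*} (w : ℕ → σ) (n : ℕ) : List σ :=
  List.ofFn (fun i : Fin n => w i)

/-- The finite word `u` occurs in the infinite word `w` at position `k`. -/
def OccursAt {σ : Type*} (u : List σ) (w : ℕ → σ) (k : ℕ) : Prop :=
  ∀ (i : ℕ) (h : i < u.length), u.get ⟨i, h⟩ = w (k + i)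

/-- `u` is a (finite) factor of the infinite word `w`. -/
def IsFactorInf {σ : Type*} (u : List σ) (w : ℕ → σ) : Prop :=
  ∃ k, OccursAt u w k

/-- An infinite word is recurrent if each of its factors occurs infinitely often in it. -/
def Recurrent {σ : Type*} (w : ℕ → σ) : Prop :=
  ∀ (u : List σ) (k : ℕ), OccursAt u w k → ∀ N, ∃ m, N ≤ m ∧ OccursAt u w m

/-- `u` is a quasiperiod of the infinite word `w`: `u` is non-empty and there is a
sequence of prefixes `p n ++ u` of `w` with `p 0 = ε` and
`|p n| < |p (n+1)| ≤ |p n ++ u|`. -/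
def IsQuasiperiod {A : Type*} (u : List A) (w : ℕ → A) : Prop :=
  u ≠ [] ∧ ∃ p : ℕ → List A, p 0 = [] ∧
    (∀ n, (p n).length < (p (n + 1)).length ∧
      (p (n + 1)).length ≤ (p n).length + u.length) ∧
    ∀ n, IsPref (p n ++ u) w

/-- An infinite word is quasiperiodic if it has a quasiperiod. -/
def Quasiperiodic {A : Type*} (w : ℕ → A) : Prop := ∃ u, IsQuasiperiod u w

/-- A set `X` of finite words covers the infinite word `w`. -/
def CoveredBy {A : Type*} (X : Set (List A)) (w : ℕ → A) : Prop :=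
  ∃ (p z : ℕ → List A), p 0 = [] ∧ (∀ n, z n ∈ X) ∧
    (∀ n, (p n).length < (p (n + 1)).length ∧
      (p (n + 1)).length ≤ (p n).length + (z n).length) ∧
    ∀ n, IsPref (p n ++ z n) w

/-- The morphism `L_a` : `a ↦ a`, `b ↦ ab` for `b ≠ a`. -/
def Lm {A : Type*} [DecidableEq A] (a : A) (u : List A) : List A :=
  u.flatMap (fun b => if b = a then [a] else [a, b])

/-- The morphism `R_a` : `a ↦ a`, `b ↦ ba` for `b ≠ a`. -/
def Rm {A : Type*} [DecidableEq A] (a : A) (u : List A) : List A :=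
  u.flatMap (fun b => if b = a then [a] else [b, a])

/-- The pure epistandard morphism `μ_v = L_{v_1} ∘ ⋯ ∘ L_{v_k}` for `v = v_1 ⋯ v_k`. -/
def muL {A : Type*} [DecidableEq A] (v : List A) (u : List A) : List A :=
  v.foldr Lm u

/-- The pure episturmian morphism `μ_{v̄} = R_{v_1} ∘ ⋯ ∘ R_{v_k}` for `v = v_1 ⋯ v_k`. -/
def muR {A : Type*} [DecidableEq A] (v : List A) (u : List A) : List A :=
  v.foldr Rm u

/-- Spinned letters are elements of `A × Bool`: `(a, false)` is the `L`-spinned letter `a`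
and `(a, true)` is the `R`-spinned letter `ā`.  `μ` on a spinned letter. -/
def muS {A : Type*} [DecidableEq A] (x : A × Bool) : List A → List A :=
  if x.2 then Rm x.1 else Lm x.1

/-- The pure episturmian morphism `μ_{w̆}` directed by the finite spinned word `w̆`. -/
def muW {A : Type*} [DecidableEq A] (w : List (A × Bool)) (u : List A) : List A :=
  w.foldr muS u

/-- `x` is the image of the infinite word `w` under the (letterwise) morphism whose
image on the letter `a` is `f a` (all images being non-empty). -/
def SubstOf {A : Type*} (f : A → List A) (w x : ℕ → A) : Prop :=
  ∀ n, IsPref ((prefWord w n).flatMap f) x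

/-- The spinned infinite word `Δ` directs the infinite word `t`: there is a sequence
`ts` of recurrent infinite words with `ts 0 = t` and `ts n = μ_{Δ n}(ts (n+1))`. -/
def Directs {A : Type*} [DecidableEq A] (Δ : ℕ → A × Bool) (t : ℕ → A) : Prop :=
  ∃ ts : ℕ → (ℕ → A), ts 0 = t ∧ (∀ n, Recurrent (ts n)) ∧
    ∀ n, SubstOf (fun a => muS (Δ n) [a]) (ts (n + 1)) (ts n)

/-- An infinite word is episturmian iff it is directed by some spinned infinite word. -/
def Episturmian {A : Type*} [DecidableEq A] (t : ℕ → A) : Prop :=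
  ∃ Δ : ℕ → A × Bool, Directs Δ t

/-- The palindromic right-closure `w⁽⁺⁾`: the shortest palindrome having `w` as a
prefix, obtained by appending the reverse of `w` deprived of its longest
palindromic suffix. -/
def palClosure {A : Type*} [DecidableEq A] (w : List A) : List A :=
  w ++ (w.take (w.length -
    Nat.findGreatest
      (fun k => (w.drop (w.length - k)).reverse = w.drop (w.length - k)) w.length)).reverse

/-- Iterated palindromic closure: `Pal ε = ε`, `Pal (w x) = (Pal w · x)⁽⁺⁾`. -/
def Pal {A : Type*} [DecidableEq A] (w : List A) : List A :=
  w.foldl (fun p x => palClosure (p ++ [x])) []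

/-- `s` is the epistandard word directed by `Δ`, i.e. `s = lim_n Pal(Δ_1 ⋯ Δ_n)`. -/
def IsEpistandardOf {A : Type*} [DecidableEq A] (Δ : ℕ → A) (s : ℕ → A) : Prop :=
  ∀ n, IsPref (Pal (prefWord Δ n)) s

/-- The concatenation of a finite word and an infinite word. -/
def catInf {σ : Type*} (u : List σ) (y : ℕ → σ) : ℕ → σ :=
  fun n => if h : n < u.length then u.get ⟨n, h⟩ else y (n - u.length)

/-- Prepending a letter to an infinite word. -/
def consInf {σ : Type*} (a : σ) (w : ℕ → σ) : ℕ → σ :=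
  fun n => match n with
  | 0 => a
  | Nat.succ k => w k

def UltimatelyPeriodic {A : Type*} (w : ℕ → A) : Prop :=
  ∃ p N : ℕ, 0 < p ∧ ∀ n, N ≤ n → w (n + p) = w n

/-- A factor `u` of `t` is right special if `ua`, `ub` are factors of `t` for two
distinct letters `a`, `b`. -/
def RightSpecial {A : Type*} (u : List A) (t : ℕ → A) : Prop :=
  ∃ a b : A, a ≠ b ∧ IsFactorInf (u ++ [a]) t ∧ IsFactorInf (u ++ [b]) t

/-- The combinatorial definition of episturmian words: the set of factors is closed
under reversal, and there is at most one right special factor of each length. -/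
def EpisturmianC {A : Type*} (t : ℕ → A) : Prop :=
  (∀ u : List A, IsFactorInf u t → IsFactorInf u.reverse t) ∧
  ∀ u v : List A, RightSpecial u t → RightSpecial v t → u.length = v.length → u = v

/-- The shifting factor `S_{w̆}` of `μ_{w̆}` (so that `μ_{w̆}(v) = S_{w̆}⁻¹ μ_w(v) S_{w̆}`):
`S_ε = ε`, `S_{a w̆} = L_a(S_{w̆})`, `S_{ā w̆} = L_a(S_{w̆}) a`. -/
def Sfac {A : Type*} [DecidableEq A] : List (A × Bool) → List A
  | [] => []
  | x :: v => if x.2 then Lm x.1 (Sfac v) ++ [x.1] else Lm x.1 (Sfac v)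

/-- A spinned infinite word is normalized if it contains infinitely many `L`-spinned
letters but no factor of the form `ā v̄ a` (`v̄` being `R`-spinned). -/
def NormalizedInf {A : Type*} (Δ : ℕ → A × Bool) : Prop :=
  (∀ N, ∃ n, N ≤ n ∧ (Δ n).2 = false) ∧
  ∀ (a : A) (i j : ℕ), i < j → Δ i = (a, true) →
    (∀ k, i < k → k < j → (Δ k).2 = true) → Δ j ≠ (a, false)

/-- A finite spinned word is normalized if it has no factor of the form `ā v̄ a`. -/
def NormalizedFin {A : Type*} (u : List (A × Bool)) : Prop :=
  ¬ ∃ (a : A) (w1 w2 : List (A × Bool)) (z : List A),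
      u = w1 ++ (a, true) :: (z.map (fun x => (x, true)) ++ (a, false) :: w2)

/-- Strict lexicographic order on infinite words induced by the order on letters. -/
def LexLt {A : Type*} [LinearOrder A] (x y : ℕ → A) : Prop :=
  ∃ n : ℕ, (∀ i, i < n → x i = y i) ∧ x n < y n

/-- An infinite word is an infinite Lyndon word if it is strictly lexicographically
smaller than each of its proper suffixes. -/
def InfLyndon {A : Type*} [LinearOrder A] (w : ℕ → A) : Prop :=
  ∀ i : ℕ, 0 < i → LexLt w (fun n => w (n + i))

/-- A return to `v` in `w`: the segment of `w` between two consecutive occurrences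
of `v`. -/
def IsReturn {σ : Type*} (v : List σ) (w : ℕ → σ) (r : List σ) : Prop :=
  ∃ k k' : ℕ, k < k' ∧ OccursAt v w k ∧ OccursAt v w k' ∧
    (∀ j, k < j → j < k' → ¬ OccursAt v w j) ∧
    r = List.ofFn (fun i : Fin (k' - k) => w (k + i))

/-- `u` is a quasiperiod of the finite word `z`: every position of `z` falls within
some occurrence of `u` in `z`. -/
def IsQuasiperiodFin {A : Type*} (u z : List A) : Prop :=
  u ≠ [] ∧ ∀ i, i < z.length → ∃ k, k ≤ i ∧ i < k + u.length ∧ u <+: z.drop k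


/-! ### Factors of infinite words as infixes of prefixes -/

section Factors

variable {σ : Type*} {t : ℕ → σ} {u v : List σ}

lemma length_prefWord (t : ℕ → σ) (n : ℕ) : (prefWord t n).length = n := by
  simp [prefWord]

lemma IsPref.prefix_of_length_le (hu : IsPref u t) (hv : IsPref v t)
    (h : u.length ≤ v.length) : u <+: v := by
  rw [List.prefix_iff_eq_take]
  apply List.ext_getElem
  · simp [h]
  · intro i h1 h2
    have a := hu i h1
    have b := hv i (by omega)
    simp_all

lemma isPref_prefWord (t : ℕ → σ) (n : ℕ) : IsPref (prefWord t n) t := by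
  intro i h
  simp [prefWord]

lemma IsPref.isFactorInf_of_infix (hv : IsPref v t) (h : u <:+: v) : IsFactorInf u t := by
  obtain ⟨p, s, rfl⟩ := h
  refine ⟨p.length, fun i hi => ?_⟩
  have := hv (p.length + i) (by simp; omega)
  rw [← this]
  simp [hi]

lemma isFactorInf_iff : IsFactorInf u t ↔ ∃ n, u <:+: prefWord t n := by
  constructor
  · rintro ⟨k, hk⟩
    refine ⟨k + u.length, prefWord t k, [], ?_⟩
    apply List.ext_getElem
    · simp [prefWord]
    · intro i h1 h2
      simp only [List.append_nil, List.getElem_append, length_prefWord]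
      split_ifs with h
      · simp [prefWord]
      · have := hk (i - k) (by simp [prefWord] at h1; omega)
        rw [show k + (i - k) = i by omega] at this
        simpa [prefWord] using this
  · rintro ⟨n, hn⟩
    exact (isPref_prefWord t n).isFactorInf_of_infix hn

lemma IsFactorInf.of_infix (hv : IsFactorInf v t) (h : u <:+: v) : IsFactorInf u t := by
  obtain ⟨n, hn⟩ := isFactorInf_iff.1 hv
  exact isFactorInf_iff.2 ⟨n, h.trans hn⟩

lemma RightSpecial.of_suffix (hv : RightSpecial v t) (h : u <:+ v) : RightSpecial u t := by
  obtain ⟨a, b, hab, ha, hb⟩ := hv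
  obtain ⟨p, rfl⟩ := h
  exact ⟨a, b, hab, ha.of_infix ⟨p, [], by simp⟩, hb.of_infix ⟨p, [], by simp⟩⟩

/-- If there is at most one right special factor of each length, then right special factors are
totally ordered by the suffix relation. -/
lemma suffix_of_unique_rightSpecial
    (H : ∀ u v : List σ, RightSpecial u t → RightSpecial v t → u.length = v.length → u = v)
    (hu : RightSpecial u t) (hv : RightSpecial v t) (h : u.length ≤ v.length) : u <:+ v := by
  have hs := List.drop_suffix (v.length - u.length) v
  rw [H u _ hu (hv.of_suffix hs) (by simp; omega)]
  exact hs

end Factors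

/-! ### Decoding the morphism on finite words -/

section Decoding

variable {A : Type*} [DecidableEq A] {α : A}

@[simp] lemma Lm_nil : Lm α [] = [] := rfl

@[simp] lemma Lm_append (u v : List A) : Lm α (u ++ v) = Lm α u ++ Lm α v := by
  simp [Lm]

@[simp] lemma Lm_cons_self (u : List A) : Lm α (α :: u) = α :: Lm α u := by
  simp [Lm]

lemma Lm_cons_of_ne {b : A} (h : b ≠ α) (u : List A) : Lm α (b :: u) = α :: b :: Lm α u := by
  simp [Lm, h]

lemma exists_Lm_append_eq_cons (u : List A) : ∃ t, Lm α u ++ [α] = α :: t := by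
  cases u with
  | nil => exact ⟨[], rfl⟩
  | cons c u =>
    by_cases h : c = α
    · subst h; simp
    · simp [Lm_cons_of_ne h]

lemma length_le_length_Lm (u : List A) : u.length ≤ (Lm α u).length := by
  induction u with
  | nil => simp
  | cons c u ih =>
    by_cases h : c = α
    · subst h; simpa
    · simp [Lm_cons_of_ne h]; omega

lemma reverse_Lm_append (v : List A) :
    (Lm α v ++ [α]).reverse = Lm α v.reverse ++ [α] := by
  induction v with
  | nil => simp
  | cons c v ih =>
    by_cases h : c = α
    · subst h; simp at ih; simp [ih]
    · simp at ih; simp [Lm_cons_of_ne h, ih]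

lemma Lm_append_infix {v z : List A} (h : v <:+: z) :
    Lm α v ++ [α] <:+: Lm α z ++ [α] := by
  obtain ⟨p, s, rfl⟩ := h
  obtain ⟨t, ht⟩ := exists_Lm_append_eq_cons (α := α) s
  exact ⟨Lm α p, t, by simp [ht]⟩

lemma Lm_append_suffix {v z : List A} (h : v <:+ z) :
    Lm α v ++ [α] <:+ Lm α z ++ [α] := by
  obtain ⟨p, rfl⟩ := h
  exact ⟨Lm α p, by simp⟩

lemma Lm_append_pair_infix {v z : List A} {a : A} (h : v ++ [a] <:+: z) :
    Lm α v ++ [α, a] <:+: Lm α z ++ [α] := by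
  refine List.IsInfix.trans ?_ (Lm_append_infix h)
  by_cases ha : a = α
  · subst ha; exact ⟨[], [], by simp⟩
  · exact ⟨[], [α], by simp [Lm_cons_of_ne ha]⟩

lemma prefix_of_Lm_append_prefix {v z : List A} (h : Lm α v ++ [α] <+: Lm α z ++ [α]) :
    v <+: z := by
  induction v generalizing z with
  | nil => simp
  | cons c v ih =>
    obtain ⟨t, ht⟩ := exists_Lm_append_eq_cons (α := α) v
    cases z with
    | nil =>
      have := h.length_le
      have := length_le_length_Lm (α := α) (c :: v)
      simp only [List.length_append, List.length_cons, List.length_nil, Lm_nil] at *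
      omega
    | cons d z =>
      obtain ⟨t', ht'⟩ := exists_Lm_append_eq_cons (α := α) z
      by_cases hc : c = α <;> by_cases hd : d = α
      · subst hc; subst hd
        simp only [Lm_cons_self, List.cons_append, List.cons_prefix_cons, true_and] at h ⊢
        exact ih h
      · subst hc
        simp [Lm_cons_of_ne hd, ht] at h
        exact absurd h.1.symm hd
      · subst hd
        simp [Lm_cons_of_ne hc, ht'] at h
        exact absurd h.1 hc
      · simp only [Lm_cons_of_ne hc, Lm_cons_of_ne hd, List.cons_append, List.cons_prefix_cons,
          true_and] at h ⊢
        exact ⟨h.1, ih h.2⟩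

lemma append_prefix_of_Lm_append_pair_prefix {v z : List A} {a : A}
    (h : Lm α v ++ [α, a] <+: Lm α z ++ [α]) : v ++ [a] <+: z := by
  by_cases ha : a = α
  · subst ha
    apply prefix_of_Lm_append_prefix (α := a)
    simpa using h
  · obtain ⟨s, rfl⟩ : v <+: z := prefix_of_Lm_append_prefix
      (List.IsPrefix.trans (l₂ := Lm α v ++ [α, a]) ⟨[a], by simp⟩ h)
    rw [Lm_append, List.append_assoc, List.prefix_append_right_inj] at h
    cases s with
    | nil => simp at h
    | cons d s =>
      obtain ⟨t, ht⟩ := exists_Lm_append_eq_cons (α := α) s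
      by_cases hd : d = α
      · subst hd
        simp [ht] at h
        exact absurd h ha
      · simp [Lm_cons_of_ne hd] at h
        simp [h]

/-- An infix starting with `α` starts at a block boundary. -/
lemma exists_suffix_of_cons_infix {t z : List A} (h : α :: t <:+: Lm α z ++ [α]) :
    ∃ z', z' <:+ z ∧ α :: t <+: Lm α z' ++ [α] := by
  induction z with
  | nil =>
    refine ⟨[], List.suffix_rfl, ?_⟩
    have := h.length_le
    simp at this
    simp [this]
  | cons d z ih =>
    have lift : (α :: t <:+: Lm α z ++ [α]) →
        ∃ z', z' <:+ d :: z ∧ α :: t <+: Lm α z' ++ [α] := fun h' => by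
      obtain ⟨z', hz, hp⟩ := ih h'
      exact ⟨z', hz.trans (List.suffix_cons d z), hp⟩
    by_cases hd : d = α
    · subst hd
      rw [Lm_cons_self, List.cons_append, List.infix_cons_iff] at h
      rcases h with h | h
      · exact ⟨d :: z, List.suffix_rfl, by simpa using h⟩
      · exact lift h
    · rw [Lm_cons_of_ne hd, List.cons_append, List.cons_append, List.infix_cons_iff,
        List.infix_cons_iff] at h
      rcases h with h | h | h
      · exact ⟨d :: z, List.suffix_rfl, by simpa [Lm_cons_of_ne hd] using h⟩
      · rw [List.cons_prefix_cons] at h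
        exact absurd h.1.symm hd
      · exact lift h

lemma infix_of_Lm_append_infix {v z : List A} (h : Lm α v ++ [α] <:+: Lm α z ++ [α]) :
    v <:+: z := by
  obtain ⟨t, ht⟩ := exists_Lm_append_eq_cons (α := α) v
  rw [ht] at h
  obtain ⟨z', hz, hp⟩ := exists_suffix_of_cons_infix h
  rw [← ht] at hp
  exact (prefix_of_Lm_append_prefix hp).isInfix.trans hz.isInfix

lemma append_infix_of_Lm_append_pair_infix {v z : List A} {a : A}
    (h : Lm α v ++ [α, a] <:+: Lm α z ++ [α]) : v ++ [a] <:+: z := by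
  obtain ⟨t, ht⟩ := exists_Lm_append_eq_cons (α := α) v
  have ht' : Lm α v ++ [α, a] = α :: (t ++ [a]) := by
    rw [← List.cons_append, ← ht]; simp
  rw [ht'] at h
  obtain ⟨z', hz, hp⟩ := exists_suffix_of_cons_infix h
  rw [← ht'] at hp
  exact (append_prefix_of_Lm_append_pair_prefix hp).isInfix.trans hz.isInfix

/-- A prefix of `L(z)α` ending with `α` stops right after a block boundary. -/
lemma exists_eq_Lm_of_append_prefix {t z : List A} (h : t ++ [α] <+: Lm α z ++ [α]) :
    ∃ v, t = Lm α v := by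
  induction z generalizing t with
  | nil =>
    have := h.length_le
    simp at this
    exact ⟨[], by simp [this]⟩
  | cons d z ih =>
    cases t with
    | nil => exact ⟨[], rfl⟩
    | cons c t =>
      by_cases hd : d = α
      · subst hd
        simp only [Lm_cons_self, List.cons_append, List.cons_prefix_cons] at h
        obtain ⟨v, rfl⟩ := ih h.2
        exact ⟨d :: v, by simp [h.1]⟩
      · simp only [Lm_cons_of_ne hd, List.cons_append, List.cons_prefix_cons] at h
        obtain ⟨rfl, h⟩ := h
        cases t with
        | nil => simp at h; exact absurd h.symm hd
        | cons e t =>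
          simp only [List.cons_append, List.cons_prefix_cons] at h
          obtain ⟨v, rfl⟩ := ih h.2
          exact ⟨d :: v, by simp [Lm_cons_of_ne hd, h.1]⟩

/-- A letter other than `α` is always preceded by `α`. -/
lemma cons_infix_of_ne {c : A} {t z : List A} (hc : c ≠ α) (h : c :: t <:+: Lm α z ++ [α]) :
    α :: c :: t <:+: Lm α z ++ [α] := by
  induction z with
  | nil =>
    have := h.mem (List.mem_cons_self)
    simp at this
    exact absurd this hc
  | cons d z ih =>
    by_cases hd : d = α
    · subst hd
      rw [Lm_cons_self, List.cons_append, List.infix_cons_iff, List.cons_prefix_cons] at h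
      rw [Lm_cons_self, List.cons_append]
      rcases h with h | h
      · exact absurd h.1 hc
      · exact List.infix_cons (ih h)
    · rw [Lm_cons_of_ne hd, List.cons_append, List.cons_append, List.infix_cons_iff,
        List.infix_cons_iff] at h
      rw [Lm_cons_of_ne hd, List.cons_append, List.cons_append]
      rcases h with h | h | h
      · exact absurd (List.cons_prefix_cons.1 h).1 hc
      · exact (List.cons_prefix_cons.2 ⟨rfl, h⟩).isInfix
      · exact List.infix_cons (List.infix_cons (ih h))

/-- A letter other than `α` is always followed by `α`. -/
lemma eq_of_pair_infix {c a : A} {z : List A} (hc : c ≠ α)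
    (h : [c, a] <:+: Lm α z ++ [α]) : a = α := by
  obtain ⟨z', -, h'⟩ := exists_suffix_of_cons_infix (cons_infix_of_ne hc h)
  cases z' with
  | nil => simp at h'
  | cons d z =>
    obtain ⟨t, ht⟩ := exists_Lm_append_eq_cons (α := α) z
    by_cases hd : d = α
    · subst hd
      simp [ht] at h'
      exact absurd h'.1 hc
    · simp [Lm_cons_of_ne hd, ht] at h'
      exact h'.2

end Decoding

/-! ### Factors and right special factors of the image word -/

section Image

variable {A : Type*} [DecidableEq A] {α : A} {w x : ℕ → A}

lemma SubstOf.isPref_Lm (hx : SubstOf (fun b => Lm α [b]) w x) (n : ℕ) :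
    IsPref (Lm α (prefWord w n)) x := by
  have := hx n
  simpa [Lm] using this

lemma SubstOf.isPref_Lm_append (hx : SubstOf (fun b => Lm α [b]) w x) (n : ℕ) :
    IsPref (Lm α (prefWord w n) ++ [α]) x := by
  have h := hx.isPref_Lm (n + 1)
  have hw : prefWord w (n + 1) = prefWord w n ++ [w n] := by
    simp only [prefWord, List.ofFn_succ_last, Fin.val_castSucc, Fin.val_last]
  have hp : Lm α (prefWord w n) ++ [α] <+: Lm α (prefWord w (n + 1)) := by
    rw [hw, Lm_append, List.prefix_append_right_inj]
    by_cases ha : w n = α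
    · simp [ha]
    · simp [Lm_cons_of_ne ha]
  intro i hi
  have := h i (hi.trans_le hp.length_le)
  rw [← this]
  exact hp.getElem hi

lemma SubstOf.isFactorInf_iff (hx : SubstOf (fun b => Lm α [b]) w x) {u : List A} :
    IsFactorInf u x ↔ ∃ n, u <:+: Lm α (prefWord w n) ++ [α] := by
  constructor
  · intro h
    obtain ⟨n, hn⟩ := EpiQP.isFactorInf_iff.1 h
    refine ⟨n, hn.trans (IsPref.prefix_of_length_le (isPref_prefWord x n)
      (hx.isPref_Lm_append n) ?_).isInfix⟩
    have := length_le_length_Lm (α := α) (prefWord w n)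
    simp only [length_prefWord, List.length_append] at *
    omega
  · rintro ⟨n, hn⟩
    exact (hx.isPref_Lm_append n).isFactorInf_of_infix hn

lemma SubstOf.isFactorInf_Lm_append_iff (hx : SubstOf (fun b => Lm α [b]) w x) {v : List A} :
    IsFactorInf (Lm α v ++ [α]) x ↔ IsFactorInf v w := by
  rw [hx.isFactorInf_iff, EpiQP.isFactorInf_iff]
  exact exists_congr fun n => ⟨infix_of_Lm_append_infix, Lm_append_infix⟩

lemma SubstOf.isFactorInf_Lm_append_pair_iff (hx : SubstOf (fun b => Lm α [b]) w x)
    {v : List A} {a : A} : IsFactorInf (Lm α v ++ [α, a]) x ↔ IsFactorInf (v ++ [a]) w := by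
  rw [hx.isFactorInf_iff, EpiQP.isFactorInf_iff]
  exact exists_congr fun n => ⟨append_infix_of_Lm_append_pair_infix, Lm_append_pair_infix⟩

lemma SubstOf.rightSpecial_Lm_append_iff (hx : SubstOf (fun b => Lm α [b]) w x)
    {v : List A} : RightSpecial (Lm α v ++ [α]) x ↔ RightSpecial v w := by
  simp only [RightSpecial, List.append_assoc, List.cons_append, List.nil_append,
    hx.isFactorInf_Lm_append_pair_iff]

/-- A nonempty right special factor of `x = L(w)` starting with `α` is of the form `L(v)α`. -/
lemma RightSpecial.exists_eq_Lm (hx : SubstOf (fun b => Lm α [b]) w x) {t : List A}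
    (h : RightSpecial (α :: t) x) : ∃ v, α :: t = Lm α v ++ [α] := by
  obtain ⟨a, b, hab, ha, hb⟩ := h
  obtain ⟨s, c, hs⟩ : ∃ s c, α :: t = s ++ [c] :=
    ⟨_, _, (List.dropLast_append_getLast (List.cons_ne_nil α t)).symm⟩
  -- The last letter `c` has two possible successors, hence equals `α`.
  have hc : c = α := by
    by_contra hc
    have key : ∀ d, IsFactorInf (α :: t ++ [d]) x → d = α := fun d hd => by
      obtain ⟨n, hn⟩ := hx.isFactorInf_iff.1 hd
      rw [hs] at hn
      exact eq_of_pair_infix hc (List.IsInfix.trans ⟨s, [], by simp⟩ hn)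
    exact hab ((key a ha).trans (key b hb).symm)
  subst hc
  obtain ⟨n, hn⟩ := hx.isFactorInf_iff.1 (ha.of_infix ⟨[], [a], rfl⟩)
  obtain ⟨z, -, hz⟩ := exists_suffix_of_cons_infix hn
  rw [hs] at hz ⊢
  obtain ⟨v, rfl⟩ := exists_eq_Lm_of_append_prefix hz
  exact ⟨v, rfl⟩

/-- Every nonempty right special factor of `x = L(w)` is a suffix of `L(v)α` for some right
special factor `v` of `w`. -/
lemma RightSpecial.exists_Lm (hx : SubstOf (fun b => Lm α [b]) w x) {u : List A}
    (hu : u ≠ []) (h : RightSpecial u x) :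
    ∃ v, RightSpecial v w ∧ u <:+ Lm α v ++ [α] := by
  obtain ⟨t, ht, hut⟩ : ∃ t, RightSpecial (α :: t) x ∧ u <:+ α :: t := by
    obtain ⟨c, t, rfl⟩ := List.exists_cons_of_ne_nil hu
    by_cases hc : c = α
    · subst hc
      exact ⟨t, h, List.suffix_rfl⟩
    · obtain ⟨a, b, hab, ha, hb⟩ := h
      have key : ∀ d, IsFactorInf (c :: t ++ [d]) x → IsFactorInf (α :: c :: t ++ [d]) x :=
        fun d hd => by
          obtain ⟨n, hn⟩ := hx.isFactorInf_iff.1 hd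
          exact hx.isFactorInf_iff.2 ⟨n, cons_infix_of_ne hc hn⟩
      exact ⟨c :: t, ⟨a, b, hab, key a ha, key b hb⟩, List.suffix_cons _ _⟩
  obtain ⟨v, hv⟩ := ht.exists_eq_Lm hx
  rw [hv] at ht hut
  exact ⟨v, hx.rightSpecial_Lm_append_iff.1 ht, hut⟩

end Image

/-- for any letter `α`, an infinite word `w` is episturmian iff
`L_α(w)` is episturmian. -/
theorem episturmian_iff_L_image_episturmian
    {A : Type*} [Fintype A] [DecidableEq A]
    (α : A) (w x : ℕ → A) (hx : SubstOf (fun b => Lm α [b]) w x) :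
    EpisturmianC w ↔ EpisturmianC x := by
  constructor
  · rintro ⟨hrev, huniq⟩
    refine ⟨fun u hu => ?_, fun u u' hu hu' hlen => ?_⟩
    · obtain ⟨n, hn⟩ := hx.isFactorInf_iff.1 hu
      have h1 := hrev _ (isFactorInf_iff.2 ⟨n, List.infix_rfl⟩)
      rw [← hx.isFactorInf_Lm_append_iff, ← reverse_Lm_append] at h1
      exact h1.of_infix (List.reverse_infix.2 hn)
    · by_cases h0 : u = []
      · subst h0
        exact (List.length_eq_zero_iff.1 hlen.symm).symm
      have hne : u' ≠ [] := by
        rintro rfl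
        exact h0 (List.length_eq_zero_iff.1 hlen)
      obtain ⟨v, hv, huv⟩ := hu.exists_Lm hx h0
      obtain ⟨v', hv', huv'⟩ := hu'.exists_Lm hx hne
      -- `u` and `u'` are suffixes of the longer of the two words `L(v)α` and `L(v')α`.
      rcases le_total v.length v'.length with h | h
      · have hs := huv.trans
          (Lm_append_suffix (α := α) (suffix_of_unique_rightSpecial huniq hv hv' h))
        exact (List.suffix_of_suffix_length_le hs huv' hlen.le).eq_of_length hlen
      · have hs := huv'.trans
          (Lm_append_suffix (α := α) (suffix_of_unique_rightSpecial huniq hv' hv h))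
        exact (List.suffix_of_suffix_length_le huv hs hlen.le).eq_of_length hlen
  · rintro ⟨hrev, huniq⟩
    refine ⟨fun v hv => ?_, fun v v' hv hv' hlen => ?_⟩
    · rw [← hx.isFactorInf_Lm_append_iff, ← reverse_Lm_append]
      exact hrev _ (hx.isFactorInf_Lm_append_iff.2 hv)
    · have h1 := hx.rightSpecial_Lm_append_iff.2 hv
      have h2 := hx.rightSpecial_Lm_append_iff.2 hv'
      -- One of `L(v)α`, `L(v')α` is a suffix of the other; decoding makes `v`, `v'` comparable.
      rcases le_total (Lm α v ++ [α]).length (Lm α v' ++ [α]).length with h | h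
      · exact (infix_of_Lm_append_infix
          (suffix_of_unique_rightSpecial huniq h1 h2 h).isInfix).eq_of_length hlen
      · exact ((infix_of_Lm_append_infix
          (suffix_of_unique_rightSpecial huniq h2 h1 h).isInfix).eq_of_length hlen.symm).symm

end EpiQP
end

section
/- Let w be an infinite word over a finite alphabet A, let y ∈ A be a letter, let X ⊆ A, and let u be a finite word. If L_y(w) is covered by the set {L_y(u)y} ∪ {L_y(u)yx : x ∈ X \ {y}}, then w is covered by the set {u} ∪ {ux : x ∈ X ∪ {y}}. -/
/-!
Why the theorem holds. Cut `L_y(w)` into its blocks `L_y(w_i)`, and let `blockStart w y i` be the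
position where the `i`-th block starts. Every block starts with `y`, and `y` occurs nowhere else,
so the starts of blocks are exactly the positions of `y` (`exists_blockStart_eq`). Hence every
occurrence of `L_y(u)y` starts at some `blockStart w y i`, and there it can be read block by block:
`u` occurs in `w` at `i` (`OccursAt.decode`); the final `y` is what certifies that the last letter
of `u` is decoded correctly.

The covering of `L_y(w)` thus has its occurrences at `blockStart w y (i n)` for strictly increasing
indices `i n`, and it remains to choose a word at each `i n` in `w` long enough to reach
`i (n + 1)`. With `m = i n + |u|`, the block `m` starts at the `y` following `L_y(u)`. A word
`L_y(u)yx` with `x ≠ y` contains that whole block, so `w m = x` and `ux` is used. A word `L_y(u)y`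
contains the whole block if `w m = y`, and then `uy` is used; otherwise it covers only the first
letter of that block, so the next occurrence starts no later than the block itself, and `u`
suffices.
-/

namespace EpiQP

/-! ### Occurrences of finite words -/

theorem occursAt_cons {σ : Type*} (a : σ) (u : List σ) (w : ℕ → σ) (k : ℕ) :
    OccursAt (a :: u) w k ↔ w k = a ∧ OccursAt u w (k + 1) := by
  constructor
  · intro h
    refine ⟨(h 0 (by simp)).symm, fun i hi => ?_⟩
    have := h (i + 1) (by simpa using hi)
    rw [show k + 1 + i = k + (i + 1) by omega]
    simpa using this
  · rintro ⟨h0, h⟩ i hi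
    cases i with
    | zero => exact h0.symm
    | succ j =>
      have := h j (by simpa using hi)
      rw [show k + (j + 1) = k + 1 + j by omega]
      simpa using this

theorem occursAt_nil {σ : Type*} (w : ℕ → σ) (k : ℕ) : OccursAt [] w k :=
  fun _ hi => absurd hi (by simp)

theorem occursAt_append {σ : Type*} (u v : List σ) (w : ℕ → σ) (k : ℕ) :
    OccursAt (u ++ v) w k ↔ OccursAt u w k ∧ OccursAt v w (k + u.length) := by
  induction u generalizing k with
  | nil => simp [occursAt_nil]
  | cons a u ih =>
    rw [List.cons_append, occursAt_cons, occursAt_cons, ih, and_assoc, List.length_cons,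
      show k + 1 + u.length = k + (u.length + 1) by omega]

theorem isPref_iff_occursAt {σ : Type*} (u : List σ) (w : ℕ → σ) :
    IsPref u w ↔ OccursAt u w 0 := by
  simp [IsPref, OccursAt]

theorem occursAt_prefWord {σ : Type*} (w : ℕ → σ) (n : ℕ) : OccursAt (prefWord w n) w 0 := by
  intro i h
  simp [prefWord]

theorem prefWord_succ {σ : Type*} (w : ℕ → σ) (n : ℕ) :
    prefWord w (n + 1) = prefWord w n ++ [w n] := by
  rw [prefWord, List.ofFn_succ_last]
  rfl

/-! ### The blocks of `L_y(w)` and their decoding -/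

/-- The position in `L_y(w)` at which the image of the letter `w n` starts, that is, the length of
`L_y(w_0 ⋯ w_{n-1})`. -/
def blockStart {A : Type*} [DecidableEq A] (w : ℕ → A) (y : A) : ℕ → ℕ
  | 0 => 0
  | n + 1 => blockStart w y n + if w n = y then 1 else 2

section Blocks

variable {A : Type*} [DecidableEq A] {w Lw : ℕ → A} {y : A}

theorem blockStart_strictMono : StrictMono (blockStart w y) := by
  refine strictMono_nat_of_lt_succ fun n => ?_
  rw [blockStart]
  split_ifs <;> omega

theorem blockStart_succ_of_eq {n : ℕ} (h : w n = y) :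
    blockStart w y (n + 1) = blockStart w y n + 1 := by
  simp [blockStart, h]

theorem blockStart_succ_of_ne {n : ℕ} (h : w n ≠ y) :
    blockStart w y (n + 1) = blockStart w y n + 2 := by
  simp [blockStart, h]

theorem length_flatMap_prefWord (n : ℕ) :
    ((prefWord w n).flatMap (fun b => Lm y [b])).length = blockStart w y n := by
  induction n with
  | zero => simp [prefWord, blockStart]
  | succ n ih =>
    rw [prefWord_succ, List.flatMap_append, List.length_append, ih, blockStart]
    simp only [List.flatMap_singleton, Lm]
    split_ifs <;> rfl

theorem occursAt_block (hLw : SubstOf (fun b => Lm y [b]) w Lw) (n : ℕ) :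
    OccursAt (Lm y [w n]) Lw (blockStart w y n) := by
  have h := hLw (n + 1)
  rw [isPref_iff_occursAt, prefWord_succ, List.flatMap_append, occursAt_append,
    length_flatMap_prefWord] at h
  simpa using h.2

theorem apply_blockStart (hLw : SubstOf (fun b => Lm y [b]) w Lw) (n : ℕ) :
    Lw (blockStart w y n) = y := by
  have h := occursAt_block hLw n
  by_cases hn : w n = y
  · simp only [Lm, List.flatMap_singleton, if_pos hn, occursAt_cons] at h
    exact h.1
  · simp only [Lm, List.flatMap_singleton, if_neg hn, occursAt_cons] at h
    exact h.1

/-- The letter after the first letter of block `n` is `w n`, whether it is the second letter of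
that block or, when `w n = y`, the first letter of the next one. -/
theorem apply_blockStart_add_one (hLw : SubstOf (fun b => Lm y [b]) w Lw) (n : ℕ) :
    Lw (blockStart w y n + 1) = w n := by
  by_cases hn : w n = y
  · rw [← blockStart_succ_of_eq hn, apply_blockStart hLw, hn]
  · have h := occursAt_block hLw n
    simp only [Lm, List.flatMap_singleton, if_neg hn, occursAt_cons] at h
    exact h.2.1

theorem exists_blockStart_eq (hLw : SubstOf (fun b => Lm y [b]) w Lw) {k : ℕ} (hk : Lw k = y) :
    ∃ i, blockStart w y i = k := by
  obtain ⟨i, h1, h2⟩ : ∃ i, blockStart w y i ≤ k ∧ k < blockStart w y (i + 1) := by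
    clear hk
    induction k with
    | zero => exact ⟨0, le_rfl, blockStart_strictMono (Nat.lt_succ_self 0)⟩
    | succ k ih =>
      obtain ⟨i, h1, h2⟩ := ih
      rcases Nat.lt_or_ge (k + 1) (blockStart w y (i + 1)) with h | h
      · exact ⟨i, by omega, h⟩
      · have := blockStart_strictMono (w := w) (y := y) (Nat.lt_succ_self (i + 1))
        exact ⟨i + 1, h, by simp only [Nat.succ_eq_add_one] at this; omega⟩
  refine ⟨i, ?_⟩
  by_cases hi : w i = y
  · rw [blockStart_succ_of_eq hi] at h2
    omega
  · rw [blockStart_succ_of_ne hi] at h2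
    by_contra hne
    have e : k = blockStart w y i + 1 := by omega
    exact hi (by rw [← apply_blockStart_add_one hLw i, ← e, hk])

/-- Block-by-block decoding of an occurrence of `L_y(u)y`. The trailing word `v` is carried along
to locate what follows `L_y(u)` at the block of index `i + |u|`. -/
theorem OccursAt.decode (hLw : SubstOf (fun b => Lm y [b]) w Lw) (u v : List A) (i : ℕ)
    (h : OccursAt (Lm y u ++ y :: v) Lw (blockStart w y i)) :
    OccursAt u w i ∧ blockStart w y (i + u.length) = blockStart w y i + (Lm y u).length ∧
      OccursAt (y :: v) Lw (blockStart w y (i + u.length)) := by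
  induction u generalizing i with
  | nil => exact ⟨occursAt_nil _ _, by simp [Lm], by simpa [Lm] using h⟩
  | cons b u ih =>
    have e : Lm y (b :: u) = (if b = y then [y] else [y, b]) ++ Lm y u := by
      simp [Lm]
    have hw := apply_blockStart_add_one hLw i
    rw [e, List.append_assoc] at h
    have key : w i = b := by
      by_cases hb : b = y
      -- The next letter is the first one of `L_y(u)yv`, hence `y` even when `u` is empty.
      · obtain ⟨t, ht⟩ : ∃ t, Lm y u ++ y :: v = y :: t := by
          cases u with
          | nil => exact ⟨v, rfl⟩
          | cons c u =>
            by_cases hc : c = y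
            · exact ⟨_, by simp only [Lm, List.flatMap_cons, if_pos hc]; rfl⟩
            · exact ⟨_, by simp only [Lm, List.flatMap_cons, if_neg hc]; rfl⟩
        rw [if_pos hb, ht, List.singleton_append, occursAt_cons, occursAt_cons] at h
        rw [← hw, h.2.1, hb]
      · rw [if_neg hb, List.cons_append, occursAt_cons, List.singleton_append, occursAt_cons] at h
        rw [← hw, h.2.1]
    have hs : blockStart w y (i + 1)
        = blockStart w y i + (if b = y then [y] else [y, b]).length := by
      rw [blockStart, key]
      split_ifs <;> rfl
    rw [occursAt_append, ← hs] at h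
    obtain ⟨h1, h2, h3⟩ := ih (i + 1) h.2
    have e2 : i + (b :: u).length = i + 1 + u.length := by simp only [List.length_cons]; omega
    rw [e2]
    refine ⟨(occursAt_cons ..).2 ⟨key, h1⟩, ?_, h3⟩
    rw [h2, e, hs, List.length_append]
    omega

end Blocks

/-! ### Transferring the covering from `L_y(w)` to `w` -/

/-- converse of Statement 14: if `L_y(w)` is covered by
`{L_y(u)y} ∪ {L_y(u)yx : x ∈ X \ {y}}`, then `w` is covered by
`{u} ∪ {ux : x ∈ X ∪ {y}}`. -/
theorem cover_of_L_preimage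
    {A : Type*} [Fintype A] [DecidableEq A]
    (w : ℕ → A) (y : A) (X : Set A) (u : List A)
    (Lw : ℕ → A) (hLw : SubstOf (fun b => Lm y [b]) w Lw)
    (h : CoveredBy (insert (Lm y u ++ [y])
      ((fun x => Lm y u ++ [y] ++ [x]) '' (X \ {y}))) Lw) :
    CoveredBy (insert u ((fun x => u ++ [x]) '' (X ∪ {y}))) w := by
  obtain ⟨p, z, hp0, hz, hlen, hpref⟩ := h
  have hocc : ∀ n, OccursAt (z n) Lw (p n).length := fun n => by
    have := (isPref_iff_occursAt _ _).1 (hpref n)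
    rw [occursAt_append, Nat.zero_add] at this
    exact this.2
  -- Both kinds of covering words are `L_y(u)yv`, with `v` empty or a letter of `X` other than `y`.
  have hform : ∀ n, ∃ v, z n = Lm y u ++ y :: v ∧ (v = [] ∨ ∃ x ∈ X, x ≠ y ∧ v = [x]) := by
    intro n
    rcases hz n with h | ⟨x, ⟨hx, hxy⟩, h⟩
    · exact ⟨[], h, Or.inl rfl⟩
    · exact ⟨[x], by rw [← h]; simp, Or.inr ⟨x, hx, hxy, rfl⟩⟩
  choose v hv hvx using hform
  have hidx : ∀ n, ∃ i, blockStart w y i = (p n).length := by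
    intro n
    have h := hocc n
    rw [hv n] at h
    refine exists_blockStart_eq hLw ?_
    cases u with
    | nil => exact ((occursAt_cons ..).1 h).1
    | cons c u =>
      by_cases hc : c = y
      · simp only [Lm, List.flatMap_cons, if_pos hc] at h
        exact ((occursAt_cons ..).1 h).1
      · simp only [Lm, List.flatMap_cons, if_neg hc] at h
        exact ((occursAt_cons ..).1 h).1
  choose i hi using hidx
  have hstep : ∀ n, ∃ z' ∈ insert u ((fun x => u ++ [x]) '' (X ∪ {y})),
      OccursAt z' w (i n) ∧ i (n + 1) ≤ i n + z'.length := by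
    intro n
    have h := hocc n
    rw [hv n, ← hi n] at h
    obtain ⟨h1, h2, h3⟩ := OccursAt.decode hLw u (v n) (i n) h
    have hle := (hlen n).2
    rw [← hi n, ← hi (n + 1), hv n, List.length_append, List.length_cons, ← Nat.add_assoc,
      ← Nat.add_assoc, ← h2] at hle
    have hw := apply_blockStart_add_one hLw (i n + u.length)
    have hux : OccursAt (u ++ [w (i n + u.length)]) w (i n) :=
      (occursAt_append ..).2 ⟨h1, (occursAt_cons ..).2 ⟨rfl, occursAt_nil _ _⟩⟩
    rcases hvx n with hn | ⟨x, hx, hxy, hn⟩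
    · rw [hn, List.length_nil, Nat.add_zero] at hle
      by_cases hy : w (i n + u.length) = y
      · rw [← blockStart_succ_of_eq hy, blockStart_strictMono.le_iff_le] at hle
        exact ⟨_, Or.inr ⟨y, Or.inr rfl, rfl⟩, hy ▸ hux, by simpa [Nat.add_assoc] using hle⟩
      · have hlt : blockStart w y (i (n + 1)) < blockStart w y (i n + u.length + 1) := by
          rw [blockStart_succ_of_ne hy]
          omega
        rw [blockStart_strictMono.lt_iff_lt] at hlt
        exact ⟨u, Or.inl rfl, h1, by omega⟩
    · rw [hn, occursAt_cons, occursAt_cons] at h3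
      have hwx : w (i n + u.length) = x := by rw [← hw, h3.2.1]
      rw [hn, List.length_singleton, ← blockStart_succ_of_ne (hwx ▸ hxy),
        blockStart_strictMono.le_iff_le] at hle
      exact ⟨_, Or.inr ⟨x, Or.inl hx, rfl⟩, hwx ▸ hux, by simpa [Nat.add_assoc] using hle⟩
  choose z' hz' hocc' hle' using hstep
  have hlenP : ∀ n, (prefWord w (i n)).length = i n := fun n => by simp [prefWord]
  refine ⟨fun n => prefWord w (i n), z', ?_, hz', fun n => ⟨?_, ?_⟩, fun n => ?_⟩
  · have h0 : i 0 = 0 := by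
      apply (blockStart_strictMono (w := w) (y := y)).injective
      rw [hi 0, hp0]
      rfl
    simp [h0, prefWord]
  · simp only [hlenP]
    rw [← (blockStart_strictMono (w := w) (y := y)).lt_iff_lt, hi, hi]
    exact (hlen n).1
  · simpa only [hlenP] using hle' n
  · rw [isPref_iff_occursAt, occursAt_append, hlenP, Nat.zero_add]
    exact ⟨occursAt_prefWord w (i n), hocc' n⟩

end EpiQP
end
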